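/- arXiv:2601.17261 — 5 statements merged into one kernel-verified Lean document; each statement's English description precedes it below -/
import Mathlib

section
/- Let G ∈ ℝ^{m×n} be a nonzero matrix, let A ∈ ℝ^{n×r} have orthonormal columns (AᵀA = I_r), and let R ∈ ℝ^{m×r} be any matrix with ⟨R, GA⟩_F ≠ 0. Define the noiseless AGZO estimate Ĝ := ⟨G, RAᵀ⟩_F · RAᵀ. Then the cosine similarity between Ĝ and G satisfies ⟨Ĝ, G⟩_F / (‖Ĝ‖_F · ‖G‖_F) = |⟨R, GA⟩_F| / (‖R‖_F · ‖G‖_F). -/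
open Matrix

attribute [local instance] Matrix.frobeniusNormedAddCommGroup Matrix.frobeniusNormedSpace

noncomputable section

/-- Frobenius inner product `⟨X,Y⟩_F = tr(XᵀY)`. -/
def frobInner {ι κ : Type*} [Fintype ι] [Fintype κ]
    (X Y : Matrix ι κ ℝ) : ℝ := (Xᵀ * Y).trace

section FrobInner

variable {ι κ : Type*} [Fintype ι] [Fintype κ]

theorem frobInner_comm (X Y : Matrix ι κ ℝ) : frobInner X Y = frobInner Y X := by
  rw [frobInner, ← trace_transpose, transpose_mul, transpose_transpose, frobInner]

theorem frobInner_smul_left (c : ℝ) (X Y : Matrix ι κ ℝ) :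
    frobInner (c • X) Y = c * frobInner X Y := by
  rw [frobInner, transpose_smul, Matrix.smul_mul, trace_smul, smul_eq_mul, frobInner]

theorem frobInner_eq_sum (X Y : Matrix ι κ ℝ) : frobInner X Y = ∑ i, ∑ j, X i j * Y i j := by
  simp only [frobInner, trace, diag_apply, mul_apply, transpose_apply]
  exact Finset.sum_comm

theorem frobInner_self_eq_norm_sq (X : Matrix ι κ ℝ) : frobInner X X = ‖X‖ ^ 2 := by
  have sum_nonneg : 0 ≤ ∑ i, ∑ j, ‖X i j‖ ^ (2 : ℝ) := by positivity
  rw [frobenius_norm_def, ← Real.sqrt_eq_rpow, Real.sq_sqrt sum_nonneg, frobInner_eq_sum]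
  simp only [Real.rpow_two, Real.norm_eq_abs, sq, abs_mul_abs_self]

theorem frobInner_mul_transpose_left {μ : Type*} [Fintype μ]
    (X : Matrix ι μ ℝ) (A : Matrix κ μ ℝ) (Y : Matrix ι κ ℝ) :
    frobInner (X * Aᵀ) Y = frobInner X (Y * A) := by
  rw [frobInner, transpose_mul, transpose_transpose, Matrix.mul_assoc, trace_mul_comm,
    Matrix.mul_assoc, frobInner]

theorem norm_mul_transpose_of_transpose_mul_self_eq_one {μ : Type*} [Fintype μ] [DecidableEq μ]
    (X : Matrix ι μ ℝ) {A : Matrix κ μ ℝ} (hA : Aᵀ * A = 1) : ‖X * Aᵀ‖ = ‖X‖ := by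
  have norm_sq_eq : ‖X * Aᵀ‖ ^ 2 = ‖X‖ ^ 2 := by
    rw [← frobInner_self_eq_norm_sq, frobInner_mul_transpose_left, Matrix.mul_assoc, hA,
      Matrix.mul_one, frobInner_self_eq_norm_sq]
  exact (sq_eq_sq₀ (norm_nonneg _) (norm_nonneg _)).1 norm_sq_eq

theorem frobInner_smul_self_div_norm_mul_norm {G D : Matrix ι κ ℝ} (hD : frobInner G D ≠ 0) :
    frobInner (frobInner G D • D) G / (‖frobInner G D • D‖ * ‖G‖)
      = |frobInner G D| / (‖D‖ * ‖G‖) := by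
  calc
    _ = |frobInner G D| * |frobInner G D| / (|frobInner G D| * (‖D‖ * ‖G‖)) := by
      rw [frobInner_smul_left, frobInner_comm D G, abs_mul_abs_self, norm_smul,
        Real.norm_eq_abs, mul_assoc]
    _ = |frobInner G D| / (‖D‖ * ‖G‖) := mul_div_mul_left _ _ (abs_ne_zero.2 hD)

end FrobInner

/-- for the noiseless AGZO estimate `Ĝ = ⟨G, RAᵀ⟩_F · RAᵀ`, the cosine
similarity with `G` is `|⟨R, GA⟩_F| / (‖R‖_F ‖G‖_F)`. -/
theorem agzo_cosine_pointwise (m n r : ℕ)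
    (G : Matrix (Fin m) (Fin n) ℝ) (hG : G ≠ 0)
    (A : Matrix (Fin n) (Fin r) ℝ) (hA : Aᵀ * A = 1)
    (R : Matrix (Fin m) (Fin r) ℝ) (hR : frobInner R (G * A) ≠ 0) :
    frobInner (frobInner G (R * Aᵀ) • (R * Aᵀ)) G
        / (‖frobInner G (R * Aᵀ) • (R * Aᵀ)‖ * ‖G‖)
      = |frobInner R (G * A)| / (‖R‖ * ‖G‖) := by
  have inner_eq : frobInner G (R * Aᵀ) = frobInner R (G * A) := by
    rw [frobInner_comm, frobInner_mul_transpose_left]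
  rw [frobInner_smul_self_div_norm_mul_norm (inner_eq ▸ hR), inner_eq,
    norm_mul_transpose_of_transpose_mul_self_eq_one R hA]

end
end

section
/- Let d ≥ 1 be an integer, let r be a random vector in ℝ^d whose coordinates are i.i.d. standard Gaussian, and let k ∈ ℝ^d be a unit vector (‖k‖₂ = 1). Then E[ |⟨r, k⟩| / ‖r‖₂ ] = Γ(d/2) / (√π · Γ((d+1)/2)), where the integrand is defined to be 0 at r = 0 (a null set) and Γ is the real Gamma function. -/
open MeasureTheory ProbabilityTheory Real

noncomputable section

/-!
The standard Gaussian measure on a finite-dimensional inner product space has a density depending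
only on the norm, so under it the direction `‖x‖⁻¹ • x` and the norm `‖x‖` are independent. Writing
`|⟪k, x⟫| = (|⟪k, x⟫| / ‖x‖) * ‖x‖` and taking expectations, the wanted moment is the quotient of
the moments of `|⟪k, x⟫|`, which is the absolute value of a real Gaussian variable of variance
`‖k‖ ^ 2`, and of `‖x‖`, which polar coordinates reduce to Gamma integrals.
-/

section Polar

variable {E F : Type*} [NormedAddCommGroup E] [NormedSpace ℝ E] [FiniteDimensional ℝ E]
  [Nontrivial E] [MeasurableSpace E] [BorelSpace E] [NormedAddCommGroup F] [NormedSpace ℝ F]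
  (μ : Measure E) [μ.IsAddHaarMeasure]

lemma integral_comp_direction_smul_comp_norm (g : E → ℝ) (h : ℝ → F) :
    ∫ x, g (‖x‖⁻¹ • x) • h ‖x‖ ∂μ =
      (∫ u, g u ∂μ.toSphere) • ∫ y, h y ∂(Measure.volumeIoiPow (Module.finrank ℝ E - 1)) :=
  calc
    ∫ x, g (‖x‖⁻¹ • x) • h ‖x‖ ∂μ
      = ∫ x : ({0}ᶜ : Set E), g (‖x.1‖⁻¹ • x.1) • h ‖x.1‖ ∂μ.comap (↑) := by
      rw [integral_subtype_comap (measurableSet_singleton _).compl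
        fun x ↦ g (‖x‖⁻¹ • x) • h ‖x‖, restrict_compl_singleton]
    _ = ∫ p, g p.1 • h p.2
          ∂μ.toSphere.prod (Measure.volumeIoiPow (Module.finrank ℝ E - 1)) := by
      simpa using μ.measurePreserving_homeomorphUnitSphereProd.integral_comp
        (Homeomorph.measurableEmbedding _) fun p ↦ g p.1 • h p.2
    _ = _ := integral_prod_smul (fun u : Metric.sphere (0 : E) 1 ↦ g u)
      fun y : Set.Ioi (0 : ℝ) ↦ h y

lemma integral_tilted_comp_direction_smul_comp_norm (φ : ℝ → ℝ) (g : E → ℝ) (h : ℝ → F) :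
    ∫ x, g (‖x‖⁻¹ • x) • h ‖x‖ ∂μ.tilted (φ ‖·‖) =
      (∫ u, g u ∂μ.toSphere) • ∫ y, (exp (φ y) / ∫ x, exp (φ ‖x‖) ∂μ) • h y
        ∂(Measure.volumeIoiPow (Module.finrank ℝ E - 1)) := by
  simp only [integral_tilted, smul_comm (exp _ / _) (g _)]
  exact integral_comp_direction_smul_comp_norm μ g fun y ↦ (exp (φ y) / ∫ x, exp (φ ‖x‖) ∂μ) • h y

lemma integral_tilted_comp_direction_smul_comp_norm_eq_smul (φ : ℝ → ℝ) (g : E → ℝ) (h : ℝ → F) :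
    ∫ x, g (‖x‖⁻¹ • x) • h ‖x‖ ∂μ.tilted (φ ‖·‖) =
      (∫ x, g (‖x‖⁻¹ • x) ∂μ.tilted (φ ‖·‖)) • ∫ x, h ‖x‖ ∂μ.tilted (φ ‖·‖) := by
  rcases eq_zero_or_isProbabilityMeasure (μ.tilted (φ ‖·‖)) with hzero | _
  · simp [hzero]
  set σ : ℝ := ∫ _, 1 ∂μ.toSphere
  set ρ : ℝ := ∫ y, exp (φ y) / ∫ x, exp (φ ‖x‖) ∂μ
    ∂(Measure.volumeIoiPow (Module.finrank ℝ E - 1))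
  have hmass : ρ * σ = 1 := by
    simpa [σ, ρ, mul_comm] using (integral_tilted_comp_direction_smul_comp_norm μ φ
      (fun _ ↦ 1) fun _ ↦ (1 : ℝ)).symm
  have hdirection : ∫ x, g (‖x‖⁻¹ • x) ∂μ.tilted (φ ‖·‖) = (∫ u, g u ∂μ.toSphere) * ρ := by
    simpa [ρ] using integral_tilted_comp_direction_smul_comp_norm μ φ g fun _ ↦ (1 : ℝ)
  have hnorm : ∫ x, h ‖x‖ ∂μ.tilted (φ ‖·‖) =
      σ • ∫ y, (exp (φ y) / ∫ x, exp (φ ‖x‖) ∂μ) • h y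
        ∂(Measure.volumeIoiPow (Module.finrank ℝ E - 1)) := by
    simpa only [one_smul] using integral_tilted_comp_direction_smul_comp_norm μ φ (fun _ ↦ 1) h
  rw [integral_tilted_comp_direction_smul_comp_norm, hdirection, hnorm, smul_smul, mul_assoc,
    hmass, mul_one]

lemma integral_norm_rpow_mul_exp_neg_mul_rpow {p q b : ℝ} (hp : 0 < p)
    (hq : -Module.finrank ℝ E < q) (hb : 0 < b) :
    ∫ x, ‖x‖ ^ q * exp (-b * ‖x‖ ^ p) ∂μ =
      Module.finrank ℝ E * μ.real (Metric.ball 0 1) *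
        (b ^ (-(Module.finrank ℝ E + q) / p) * (1 / p) *
          Gamma ((Module.finrank ℝ E + q) / p)) := by
  have hdim : 1 ≤ Module.finrank ℝ E := Module.finrank_pos
  have hradial : ∀ y ∈ Set.Ioi (0 : ℝ),
      y ^ (Module.finrank ℝ E - 1) • (y ^ q * exp (-b * y ^ p)) =
        y ^ (Module.finrank ℝ E - 1 + q) * exp (-b * y ^ p) := by
    intro y hy
    rw [smul_eq_mul, ← mul_assoc, ← rpow_natCast, ← rpow_add hy, Nat.cast_pred hdim]
  rw [integral_fun_norm_addHaar μ fun y ↦ y ^ q * exp (-b * y ^ p),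
    setIntegral_congr_fun measurableSet_Ioi hradial,
    integral_rpow_mul_exp_neg_mul_rpow hp (by linarith) hb, nsmul_eq_mul, smul_eq_mul, mul_assoc]
  ring_nf

end Polar

section StdGaussian

variable {E : Type*} [NormedAddCommGroup E] [InnerProductSpace ℝ E] [FiniteDimensional ℝ E]
  [MeasurableSpace E] [BorelSpace E]

lemma integrable_exp_neg_mul_sq_norm {b : ℝ} (hb : 0 < b) :
    Integrable fun x : E ↦ exp (-b * ‖x‖ ^ 2) := by
  have := (GaussianFourier.integrable_cexp_neg_mul_sq_norm_add (V := E) (b := b)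
    (by simpa using hb) 0 0).re
  simpa [← Complex.ofReal_pow, ← Complex.ofReal_mul, ← Complex.ofReal_neg,
    Complex.exp_ofReal_re] using this

variable (E) in
lemma stdGaussian_eq_tilted :
    stdGaussian E = volume.tilted fun x : E ↦ -(1 / 2) * ‖x‖ ^ 2 := by
  refine Measure.ext_of_charFun (funext fun t ↦ ?_)
  have hZ : (∫ x : E, exp (-(1 / 2) * ‖x‖ ^ 2) : ℝ) ≠ 0 :=
    (integral_exp_pos (integrable_exp_neg_mul_sq_norm (by norm_num))).ne'
  have hnormalization := GaussianFourier.integral_cexp_neg_mul_sq_norm (V := E) (b := 1 / 2)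
    (by norm_num)
  have hfourier := GaussianFourier.integral_cexp_neg_mul_sq_norm_add (b := 1 / 2)
    (by norm_num) Complex.I t
  have hcast : ((∫ x : E, exp (-(1 / 2) * ‖x‖ ^ 2) : ℝ) : ℂ) =
      ∫ x : E, Complex.exp (-(1 / 2) * ‖x‖ ^ 2) := by
    rw [← integral_complex_ofReal]
    simp
  symm
  calc charFun (volume.tilted fun x : E ↦ -(1 / 2) * ‖x‖ ^ 2) t
      = (∫ x : E, Complex.exp (-(1 / 2) * ‖x‖ ^ 2 + Complex.I * inner ℝ t x)) /
          (∫ x : E, exp (-(1 / 2) * ‖x‖ ^ 2) : ℝ) := by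
        rw [charFun_apply, integral_tilted, ← integral_div]
        congr 1 with x
        rw [Complex.exp_add, real_inner_comm, mul_comm Complex.I, Complex.real_smul]
        push_cast
        ring
    _ = Complex.exp (Complex.I ^ 2 * ‖t‖ ^ 2 / (4 * (1 / 2))) := by
        rw [hfourier, ← hnormalization, ← hcast, mul_div_cancel_left₀ _ (mod_cast hZ)]
    _ = charFun (stdGaussian E) t := by
        rw [charFun_stdGaussian, Complex.I_sq]
        ring_nf

lemma integral_norm_rpow_stdGaussian [Nontrivial E] {s : ℝ} (hs : -Module.finrank ℝ E < s) :
    ∫ x, ‖x‖ ^ s ∂stdGaussian E =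
      2 ^ (s / 2) * Gamma ((Module.finrank ℝ E + s) / 2) / Gamma (Module.finrank ℝ E / 2) := by
  set n := Module.finrank ℝ E
  have hn : (0 : ℝ) < n := mod_cast Module.finrank_pos
  have hball : 0 < volume.real (Metric.ball (0 : E) 1) :=
    ENNReal.toReal_pos (Metric.measure_ball_pos _ _ one_pos).ne' measure_ball_lt_top.ne
  have hradial {q : ℝ} (hq : -n < q) : ∫ x : E, ‖x‖ ^ q * exp (-(1 / 2) * ‖x‖ ^ 2) =
      n * volume.real (Metric.ball (0 : E) 1) *
        (2 ^ ((n + q) / 2) * (1 / 2) * Gamma ((n + q) / 2)) := by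
    simpa [neg_div, inv_rpow, rpow_neg, -neg_add_rev] using
      integral_norm_rpow_mul_exp_neg_mul_rpow (E := E) volume two_pos hq one_half_pos
  have hmass : ∫ x : E, exp (-(1 / 2) * ‖x‖ ^ 2) =
      n * volume.real (Metric.ball (0 : E) 1) * (2 ^ ((n : ℝ) / 2) * (1 / 2) * Gamma (n / 2)) := by
    simpa using hradial (neg_lt_zero.2 hn)
  have : 0 < Gamma ((n : ℝ) / 2) := Gamma_pos_of_pos (by positivity)
  calc ∫ x, ‖x‖ ^ s ∂stdGaussian E
      = (∫ x : E, ‖x‖ ^ s * exp (-(1 / 2) * ‖x‖ ^ 2)) /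
          ∫ x : E, exp (-(1 / 2) * ‖x‖ ^ 2) := by
        rw [stdGaussian_eq_tilted, integral_tilted, ← integral_div]
        congr 1 with x
        rw [smul_eq_mul]
        ring
    _ = _ := by
        rw [hradial hs, hmass, add_div, rpow_add two_pos]
        field_simp

lemma stdGaussian_real : stdGaussian ℝ = gaussianReal 0 1 := by
  refine Measure.ext_of_charFun (funext fun t ↦ ?_)
  simp [charFun_stdGaussian, charFun_gaussianReal, neg_div, ← Complex.ofReal_pow]

lemma integral_abs_rpow_gaussianReal {s : ℝ} (hs : -1 < s) (v : NNReal) :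
    ∫ x, |x| ^ s ∂gaussianReal 0 v = (2 * v) ^ (s / 2) * Gamma ((1 + s) / 2) / √π := by
  have hscale : gaussianReal 0 v = (stdGaussian ℝ).map (√v * ·) := by
    rw [stdGaussian_real, gaussianReal_map_const_mul]
    congr 1
    · simp
    · ext
      simp
  calc ∫ x, |x| ^ s ∂gaussianReal 0 v
      = ∫ x, √v ^ s * ‖x‖ ^ s ∂stdGaussian ℝ := by
        rw [hscale, integral_map (by fun_prop)
          (by fun_prop : Measurable fun x : ℝ ↦ |x| ^ s).aestronglyMeasurable]
        simp [abs_mul, mul_rpow, abs_of_nonneg]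
    _ = √v ^ s * (2 ^ (s / 2) * Gamma ((1 + s) / 2) / √π) := by
        rw [integral_const_mul, integral_norm_rpow_stdGaussian (by simpa using hs)]
        simp [← Gamma_one_half_eq]
    _ = _ := by
        rw [sqrt_eq_rpow, ← rpow_mul v.coe_nonneg, mul_rpow two_pos.le v.coe_nonneg]
        ring_nf

lemma map_inner_stdGaussian (k : E) :
    (stdGaussian E).map (inner ℝ k) = gaussianReal 0 (‖k‖₊ ^ 2) := by
  have := IsGaussian.map_eq_gaussianReal (μ := stdGaussian E) (innerSL ℝ k)
  rw [variance_dual_stdGaussian, integral_strongDual_stdGaussian, innerSL_apply_norm] at this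
  rwa [← coe_nnnorm, ← NNReal.coe_pow, toNNReal_coe] at this

lemma integral_abs_inner_rpow_stdGaussian {s : ℝ} (hs : -1 < s) (k : E) :
    ∫ x, |inner ℝ k x| ^ s ∂stdGaussian E =
      ‖k‖ ^ s * (2 ^ (s / 2) * Gamma ((1 + s) / 2) / √π) := by
  have hnorm : (‖k‖ ^ 2) ^ (s / 2) = ‖k‖ ^ s := by
    rw [← rpow_natCast, ← rpow_mul (norm_nonneg k)]
    congr 1
    push_cast
    ring
  rw [← integral_map (f := fun y : ℝ ↦ |y| ^ s) (φ := inner ℝ k) (by fun_prop)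
      (by fun_prop : Measurable fun y : ℝ ↦ |y| ^ s).aestronglyMeasurable,
    map_inner_stdGaussian, integral_abs_rpow_gaussianReal hs, NNReal.coe_pow, coe_nnnorm,
    mul_rpow two_pos.le (sq_nonneg _), hnorm]
  ring

lemma integral_abs_inner_div_norm_rpow_mul_integral_norm_rpow [Nontrivial E] (s : ℝ) (k : E) :
    (∫ x, (|inner ℝ k x| / ‖x‖) ^ s ∂stdGaussian E) * ∫ x, ‖x‖ ^ s ∂stdGaussian E =
      ∫ x, |inner ℝ k x| ^ s ∂stdGaussian E := by
  have hdirection (x : E) : |inner ℝ k (‖x‖⁻¹ • x)| = |inner ℝ k x| / ‖x‖ := by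
    rw [real_inner_smul_right, abs_mul, abs_inv, abs_norm, inv_mul_eq_div]
  have hsplit (x : E) : (|inner ℝ k x| / ‖x‖) ^ s * ‖x‖ ^ s = |inner ℝ k x| ^ s := by
    rw [← mul_rpow (by positivity) (norm_nonneg x),
      div_mul_cancel_of_imp (by simp +contextual)]
  have hindep := integral_tilted_comp_direction_smul_comp_norm_eq_smul (volume : Measure E)
    (fun y ↦ -(1 / 2) * y ^ 2) (fun u ↦ |inner ℝ k u| ^ s) (fun y ↦ y ^ s)
  simp only [← stdGaussian_eq_tilted, hdirection, smul_eq_mul, hsplit] at hindep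
  exact hindep.symm

theorem expected_abs_inner_over_norm_gaussian_general [Nontrivial E] {s : ℝ} (hs : -1 < s)
    (k : E) :
    ∫ x, (|inner ℝ k x| / ‖x‖) ^ s ∂stdGaussian E =
      ‖k‖ ^ s * (Gamma ((1 + s) / 2) * Gamma (Module.finrank ℝ E / 2) /
        (√π * Gamma ((Module.finrank ℝ E + s) / 2))) := by
  have hdim : (1 : ℝ) ≤ Module.finrank ℝ E := mod_cast Module.finrank_pos
  have : 0 < Gamma ((Module.finrank ℝ E : ℝ) / 2) := Gamma_pos_of_pos (by linarith)
  have : 0 < Gamma ((Module.finrank ℝ E + s) / 2) := Gamma_pos_of_pos (by linarith)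
  have hprod := integral_abs_inner_div_norm_rpow_mul_integral_norm_rpow s k
  rw [integral_norm_rpow_stdGaussian (by linarith), integral_abs_inner_rpow_stdGaussian hs] at hprod
  rw [eq_div_of_mul_eq (by positivity) hprod]
  field_simp

end StdGaussian

lemma integral_comp_toLp_pi_gaussianReal {ι F : Type*} [Fintype ι] [NormedAddCommGroup F]
    [NormedSpace ℝ F] (f : EuclideanSpace ℝ ι → F) :
    ∫ r, f (WithLp.toLp 2 r) ∂(Measure.pi fun _ : ι ↦ gaussianReal 0 1) =
      ∫ x, f x ∂stdGaussian (EuclideanSpace ℝ ι) := by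
  rw [← map_pi_eq_stdGaussian]
  exact (integral_map_equiv (MeasurableEquiv.toLp 2 (ι → ℝ)) f).symm

/-- if `r` has i.i.d. standard Gaussian coordinates in `ℝ^d` and `k` is a
unit vector, then `E[|⟨r,k⟩| / ‖r‖₂] = Γ(d/2)/(√π·Γ((d+1)/2))` (the integrand being
`0/0 = 0` on the null set `r = 0`). -/
theorem expected_abs_inner_over_norm_gaussian (d : ℕ) (hd : 1 ≤ d)
    (k : Fin d → ℝ) (hk : Real.sqrt (∑ i, k i ^ 2) = 1) :
    ∫ r, |∑ i, r i * k i| / Real.sqrt (∑ i, r i ^ 2)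
        ∂(Measure.pi fun _ : Fin d => gaussianReal 0 1)
      = Real.Gamma (d / 2) / (Real.sqrt π * Real.Gamma ((d + 1) / 2)) := by
  have : NeZero d := ⟨by lia⟩
  have hk' : ‖WithLp.toLp 2 k‖ = 1 := by simpa [EuclideanSpace.norm_eq] using hk
  simpa [← integral_comp_toLp_pi_gaussianReal, hk', EuclideanSpace.norm_eq, PiLp.inner_apply] using
    expected_abs_inner_over_norm_gaussian_general (s := 1) (by norm_num) (WithLp.toLp 2 k)

end
end

section
/- For every real u > 1/2, the Gamma function satisfies √(u − 1/2) < Γ(u + 1/2)/Γ(u) ≤ √u; moreover the upper bound Γ(u + 1/2)/Γ(u) ≤ √u holds for every real u > 0. -/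
open Real

/-!
Log-convexity of `Γ` between `u` and `u + 1` gives Wendel's inequality `Γ(u + s) ≤ u ^ s * Γ(u)`
for `0 ≤ s ≤ 1`. Applied at `u + s` with increment `1 - s`, the same inequality bounds
`u * Γ(u) = Γ(u + 1)` by `(u + s) ^ (1 - s) * Γ(u + s)`. At `s = 1 / 2` the two estimates read
`u / √(u + 1 / 2) ≤ Γ(u + 1 / 2) / Γ(u) ≤ √u`, and the lower one exceeds `√(u - 1 / 2)` because
`(u - 1 / 2) * (u + 1 / 2) < u ^ 2`.
-/

section Wendel

variable {u s : ℝ}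

lemma Gamma_add_le_rpow_mul_Gamma (hu : 0 < u) (hs₀ : 0 ≤ s) (hs₁ : s ≤ 1) :
    Gamma (u + s) ≤ u ^ s * Gamma u := by
  rcases hs₀.eq_or_lt with rfl | hs_pos
  · simp
  rcases hs₁.eq_or_lt with rfl | hs_lt_one
  · simp [Gamma_add_one hu.ne']
  have hΓ : 0 < Gamma u := Gamma_pos_of_pos hu
  calc
    Gamma (u + s) = Gamma ((1 - s) * u + s * (u + 1)) := by ring_nf
    _ ≤ Gamma u ^ (1 - s) * Gamma (u + 1) ^ s :=
      Gamma_mul_add_mul_le_rpow_Gamma_mul_rpow_Gamma hu (by positivity) (sub_pos.2 hs_lt_one)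
        hs_pos (sub_add_cancel 1 s)
    _ = u ^ s * (Gamma u ^ (1 - s) * Gamma u ^ s) := by
      rw [Gamma_add_one hu.ne', mul_rpow hu.le hΓ.le, mul_left_comm]
    _ = u ^ s * Gamma u := by
      rw [← rpow_add hΓ, sub_add_cancel, rpow_one]

lemma mul_Gamma_le_rpow_mul_Gamma_add (hu : 0 < u) (hs₀ : 0 ≤ s) (hs₁ : s ≤ 1) :
    u * Gamma u ≤ (u + s) ^ (1 - s) * Gamma (u + s) :=
  calc
    u * Gamma u = Gamma (u + s + (1 - s)) := by
      rw [← Gamma_add_one hu.ne', add_add_sub_cancel]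
    _ ≤ (u + s) ^ (1 - s) * Gamma (u + s) :=
      Gamma_add_le_rpow_mul_Gamma (by positivity) (sub_nonneg.2 hs₁) (sub_le_self 1 hs₀)

lemma Gamma_add_half_div_Gamma_le_sqrt (hu : 0 < u) :
    Gamma (u + 1 / 2) / Gamma u ≤ √u := by
  rw [div_le_iff₀ (Gamma_pos_of_pos hu), sqrt_eq_rpow]
  exact Gamma_add_le_rpow_mul_Gamma hu (by norm_num) (by norm_num)

lemma div_sqrt_add_half_le_Gamma_add_half_div_Gamma (hu : 0 < u) :
    u / √(u + 1 / 2) ≤ Gamma (u + 1 / 2) / Gamma u := by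
  have hwendel : u * Gamma u ≤ (u + 1 / 2) ^ (1 - 1 / 2 : ℝ) * Gamma (u + 1 / 2) :=
    mul_Gamma_le_rpow_mul_Gamma_add hu (by norm_num) (by norm_num)
  rw [sub_half, ← sqrt_eq_rpow, mul_comm √_] at hwendel
  exact (div_le_div_iff₀ (by positivity) (Gamma_pos_of_pos hu)).2 hwendel

end Wendel

lemma sqrt_sub_lt_div_sqrt_add {u a : ℝ} (hu : 0 < u) (ha : 0 < a) :
    √(u - a) < u / √(u + a) := by
  have hua : 0 < u + a := add_pos hu ha
  rw [sqrt_lt' (by positivity), div_pow, sq_sqrt hua.le, lt_div_iff₀ hua]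
  linarith [sq_pos_of_pos ha, sq_sub_sq u a]

/-- Gautschi/Wendel bounds: for every `u > 1/2`,
`√(u − 1/2) < Γ(u + 1/2)/Γ(u) ≤ √u`, and the upper bound holds for all `u > 0`. -/
theorem gamma_ratio_sqrt_bounds :
    (∀ u : ℝ, 1/2 < u →
      Real.sqrt (u - 1/2) < Real.Gamma (u + 1/2) / Real.Gamma u ∧
      Real.Gamma (u + 1/2) / Real.Gamma u ≤ Real.sqrt u) ∧
    (∀ u : ℝ, 0 < u → Real.Gamma (u + 1/2) / Real.Gamma u ≤ Real.sqrt u) := by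
  refine ⟨fun u hu => ?_, fun u hu => Gamma_add_half_div_Gamma_le_sqrt hu⟩
  have hu_pos : 0 < u := one_half_pos.trans hu
  refine ⟨?_, Gamma_add_half_div_Gamma_le_sqrt hu_pos⟩
  calc
    √(u - 1 / 2) < u / √(u + 1 / 2) := sqrt_sub_lt_div_sqrt_add hu_pos one_half_pos
    _ ≤ Gamma (u + 1 / 2) / Gamma u := div_sqrt_add_half_le_Gamma_add_half_div_Gamma hu_pos
end

section
/- For every integer D ≥ 2, √(2/(πD)) ≤ β_D ≤ √(2/(π(D−1))), where β_D := Γ(D/2)/(√π · Γ((D+1)/2)). -/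
open Real

noncomputable section

/-- `β_D = Γ(D/2)/(√π·Γ((D+1)/2))`. -/
def beta (D : ℕ) : ℝ :=
  Real.Gamma (D / 2) / (Real.sqrt π * Real.Gamma ((D + 1) / 2))

/-!
Log-convexity of `Γ` on `[x, x + 1]` gives Wendel's inequality `Γ (x + a) ≤ x ^ a * Γ x` for
`0 ≤ a ≤ 1`. Read at `x` it bounds `Γ x / Γ (x + a)` from below; read at `x + a - 1`, with exponent
`1 - a`, it bounds the same ratio from above. Up to the factor `1 / √π`, `β_D` is this ratio at
`x = D / 2` and `a = 1 / 2`.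
-/

section GammaRatio

variable {x a : ℝ}

theorem Gamma_add_le_rpow_mul_Gamma_s14 (hx : 0 < x) (ha₀ : 0 ≤ a) (ha₁ : a ≤ 1) :
    Gamma (x + a) ≤ x ^ a * Gamma x := by
  rcases ha₀.eq_or_lt with rfl | ha_pos
  · simp
  rcases ha₁.eq_or_lt with rfl | ha_lt_one
  · rw [Gamma_add_one hx.ne', rpow_one]
  have hΓ : 0 < Gamma x := Gamma_pos_of_pos hx
  calc Gamma (x + a) = Gamma ((1 - a) * x + a * (x + 1)) := by ring_nf
    _ ≤ Gamma x ^ (1 - a) * Gamma (x + 1) ^ a :=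
      Gamma_mul_add_mul_le_rpow_Gamma_mul_rpow_Gamma hx (by linarith) (sub_pos.2 ha_lt_one)
        ha_pos (sub_add_cancel 1 a)
    _ = x ^ a * (Gamma x ^ (1 - a) * Gamma x ^ a) := by
      rw [Gamma_add_one hx.ne', mul_rpow hx.le hΓ.le, mul_left_comm]
    _ = x ^ a * Gamma x := by rw [← rpow_add hΓ, sub_add_cancel, rpow_one]

theorem rpow_neg_le_Gamma_div_Gamma_add (hx : 0 < x) (ha₀ : 0 ≤ a) (ha₁ : a ≤ 1) :
    x ^ (-a) ≤ Gamma x / Gamma (x + a) := by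
  rw [le_div_iff₀ (Gamma_pos_of_pos (by linarith)), rpow_neg hx.le,
    inv_mul_le_iff₀ (rpow_pos_of_pos hx a)]
  exact Gamma_add_le_rpow_mul_Gamma_s14 hx ha₀ ha₁

theorem Gamma_div_Gamma_add_le_rpow_neg (hxa : 0 < x + a - 1) (ha₀ : 0 ≤ a) (ha₁ : a ≤ 1) :
    Gamma x / Gamma (x + a) ≤ (x + a - 1) ^ (-a) := by
  rw [div_le_iff₀ (Gamma_pos_of_pos (by linarith))]
  calc Gamma x = Gamma ((x + a - 1) + (1 - a)) := by ring_nf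
    _ ≤ (x + a - 1) ^ (1 - a) * Gamma (x + a - 1) :=
      Gamma_add_le_rpow_mul_Gamma_s14 hxa (sub_nonneg.2 ha₁) (sub_le_self 1 ha₀)
    _ = (x + a - 1) ^ (-a) * ((x + a - 1) * Gamma (x + a - 1)) := by
      rw [sub_eq_neg_add 1 a, rpow_add_one hxa.ne', mul_assoc]
    _ = (x + a - 1) ^ (-a) * Gamma (x + a) := by
      rw [← Gamma_add_one hxa.ne', sub_add_cancel]

end GammaRatio

theorem beta_eq_Gamma_div_Gamma_add_half_div_sqrt_pi (D : ℕ) :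
    beta D = Gamma (D / 2) / Gamma (D / 2 + 1 / 2) / √π := by
  rw [beta, add_div, div_div, mul_comm]

theorem sqrt_two_div_pi_mul {y : ℝ} (hy : 0 ≤ y) :
    √(2 / (π * y)) = (y / 2) ^ (-(1 / 2) : ℝ) / √π := by
  rw [rpow_neg (by positivity), ← sqrt_eq_rpow, ← sqrt_inv, inv_div, ← sqrt_div (by positivity),
    div_div, mul_comm]

/-- for every integer `D ≥ 2`, `√(2/(πD)) ≤ β_D ≤ √(2/(π(D−1)))`. -/
theorem beta_bounds (D : ℕ) (hD : 2 ≤ D) :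
    Real.sqrt (2 / (π * D)) ≤ beta D ∧ beta D ≤ Real.sqrt (2 / (π * (D - 1))) := by
  have hD' : (2 : ℝ) ≤ D := by exact_mod_cast hD
  rw [beta_eq_Gamma_div_Gamma_add_half_div_sqrt_pi, sqrt_two_div_pi_mul (by linarith),
    sqrt_two_div_pi_mul (by linarith)]
  constructor
  · gcongr
    exact rpow_neg_le_Gamma_div_Gamma_add (by linarith) (by norm_num) (by norm_num)
  · gcongr
    have shift : ((D : ℝ) - 1) / 2 = D / 2 + 1 / 2 - 1 := by ring
    rw [shift]
    exact Gamma_div_Gamma_add_le_rpow_neg (by linarith) (by norm_num) (by norm_num)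

end
end

section
/- Let r < s be positive integers, let σ_1 > σ_2 > ⋯ > σ_s ≥ 0 be real numbers, and let B_1,…,B_s ≥ 0 be real numbers such that ∑_{i=1}^r B_i > 0 and the average of the first r values is at least the overall average: (1/r)·∑_{i=1}^r B_i ≥ (1/s)·∑_{i=1}^s B_i. Then s · ∑_{i=1}^r B_i σ_i² > r · ∑_{i=1}^s B_i σ_i²; equivalently, (∑_{i=1}^r B_i σ_i²)/(∑_{i=1}^s B_i σ_i²) > r/s. Moreover, if s < d_in for positive integers d_in, d_out, then r/s ≥ r/(d_in − 1/d_out). -/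
open Finset

/-!
The largest weight `c` outside the selected set `S` lies strictly below every weight on `S`, so
subtracting `c` from all weights leaves a positive total on `S` and only nonpositive terms off `S`.
The subtracted constant part is controlled by the hypothesis on averages.
-/

theorem sum_mul_eq_mul_sum_add_sum_mul_sub {ι R : Type*} [CommRing R]
    (S : Finset ι) (B w : ι → R) (c : R) :
    ∑ i ∈ S, B i * w i = c * ∑ i ∈ S, B i + ∑ i ∈ S, B i * (w i - c) := by
  rw [mul_sum, ← sum_add_distrib]
  exact sum_congr rfl fun i _ => by ring

section OrderedRing

variable {ι R : Type*} [CommRing R] [LinearOrder R] [IsStrictOrderedRing R]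
  {S T : Finset ι} {B w : ι → R} {a b c : R}

theorem sum_mul_pos_of_sum_pos (hB : ∀ i ∈ S, 0 ≤ B i) (hBpos : 0 < ∑ i ∈ S, B i)
    (hw : ∀ i ∈ S, 0 < w i) : 0 < ∑ i ∈ S, B i * w i := by
  obtain ⟨k, hkS, hBk⟩ : ∃ k ∈ S, 0 < B k := (sum_pos_iff_of_nonneg hB).1 hBpos
  exact sum_pos' (fun i hi => mul_nonneg (hB i hi) (hw i hi).le)
    ⟨k, hkS, mul_pos hBk (hw k hkS)⟩

theorem sum_mul_le_sum_mul_of_subset_of_nonpos (hST : S ⊆ T) (hB : ∀ i ∈ T, i ∉ S → 0 ≤ B i)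
    (hw : ∀ i ∈ T, i ∉ S → w i ≤ 0) : ∑ i ∈ T, B i * w i ≤ ∑ i ∈ S, B i * w i := by
  classical
  rw [← sum_sdiff hST]
  refine add_le_of_nonpos_left (sum_nonpos fun i hi => ?_)
  obtain ⟨hiT, hiS⟩ := mem_sdiff.1 hi
  exact mul_nonpos_of_nonneg_of_nonpos (hB i hiT hiS) (hw i hiT hiS)

theorem mul_sum_mul_lt_mul_sum_mul_of_threshold (hST : S ⊆ T) (ha : 0 ≤ a) (hab : a < b)
    (hc : 0 ≤ c) (hB : ∀ i ∈ T, 0 ≤ B i) (hBpos : 0 < ∑ i ∈ S, B i)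
    (hBle : a * ∑ i ∈ T, B i ≤ b * ∑ i ∈ S, B i)
    (hwS : ∀ i ∈ S, c < w i) (hwT : ∀ i ∈ T, i ∉ S → w i ≤ c) :
    a * ∑ i ∈ T, B i * w i < b * ∑ i ∈ S, B i * w i := by
  have excess_le : ∑ i ∈ T, B i * (w i - c) ≤ ∑ i ∈ S, B i * (w i - c) :=
    sum_mul_le_sum_mul_of_subset_of_nonpos hST (fun i hi _ => hB i hi)
      fun i hiT hiS => sub_nonpos.2 (hwT i hiT hiS)
  have excess_pos : 0 < ∑ i ∈ S, B i * (w i - c) :=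
    sum_mul_pos_of_sum_pos (fun i hi => hB i (hST hi)) hBpos fun i hi => sub_pos.2 (hwS i hi)
  calc a * ∑ i ∈ T, B i * w i
      = c * (a * ∑ i ∈ T, B i) + a * ∑ i ∈ T, B i * (w i - c) := by
        rw [sum_mul_eq_mul_sum_add_sum_mul_sub T B w c]; ring
    _ ≤ c * (b * ∑ i ∈ S, B i) + a * ∑ i ∈ S, B i * (w i - c) := by gcongr
    _ < c * (b * ∑ i ∈ S, B i) + b * ∑ i ∈ S, B i * (w i - c) := by gcongr
    _ = b * ∑ i ∈ S, B i * w i := by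
        rw [sum_mul_eq_mul_sum_add_sum_mul_sub S B w c]; ring

theorem mul_sum_mul_lt_mul_sum_mul_of_dominant (hST : S ⊂ T) (ha : 0 ≤ a) (hab : a < b)
    (hB : ∀ i ∈ T, 0 ≤ B i) (hBpos : 0 < ∑ i ∈ S, B i)
    (hBle : a * ∑ i ∈ T, B i ≤ b * ∑ i ∈ S, B i)
    (hw : ∀ j ∈ T, j ∉ S → 0 ≤ w j) (hdom : ∀ i ∈ S, ∀ j ∈ T, j ∉ S → w j < w i) :
    a * ∑ i ∈ T, B i * w i < b * ∑ i ∈ S, B i * w i := by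
  classical
  obtain ⟨m, hm, hmax⟩ := exists_max_image (T \ S) w (sdiff_nonempty.2 hST.2)
  obtain ⟨hmT, hmS⟩ := mem_sdiff.1 hm
  exact mul_sum_mul_lt_mul_sum_mul_of_threshold hST.1 ha hab (hw m hmT hmS) hB hBpos hBle
    (fun i hi => hdom i hi m hmT hmS) fun j hjT hjS => hmax j (mem_sdiff.2 ⟨hjT, hjS⟩)

end OrderedRing

section OrderedField

variable {ι K : Type*} [Field K] [LinearOrder K] [IsStrictOrderedRing K]

theorem div_sub_one_div_le_div {r s n d : K} (hr : 0 ≤ r) (hs : 0 < s) (hn : s + 1 ≤ n)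
    (hd : 1 ≤ d) : r / (n - 1 / d) ≤ r / s := by
  have one_div_le : 1 / d ≤ 1 := div_le_one_of_le₀ hd (zero_le_one.trans hd)
  exact div_le_div_of_nonneg_left hr hs (by linarith)

theorem agzo_energy_fraction_general {S T : Finset ι} (hST : S ⊂ T) {B w : ι → K}
    (hw : ∀ j ∈ T, j ∉ S → 0 ≤ w j) (hdom : ∀ i ∈ S, ∀ j ∈ T, j ∉ S → w j < w i)
    (hB : ∀ i ∈ T, 0 ≤ B i) (hBpos : 0 < ∑ i ∈ S, B i)
    (havg : (1 / #T : K) * ∑ i ∈ T, B i ≤ (1 / #S : K) * ∑ i ∈ S, B i) :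
    (#S : K) * ∑ i ∈ T, B i * w i < (#T : K) * ∑ i ∈ S, B i * w i ∧
    (#S : K) / #T < (∑ i ∈ S, B i * w i) / ∑ i ∈ T, B i * w i ∧
    ∀ din dout : ℕ, 0 < dout → #T < din →
      (#S : K) / ((din : K) - 1 / dout) ≤ (#S : K) / #T := by
  have hS : (0 : K) < #S := by exact_mod_cast (nonempty_of_sum_ne_zero hBpos.ne').card_pos
  have hcard : (#S : K) < #T := by exact_mod_cast card_lt_card hST
  have hT : (0 : K) < #T := hS.trans hcard
  have cross_le : (#S : K) * ∑ i ∈ T, B i ≤ #T * ∑ i ∈ S, B i := by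
    rw [one_div_mul_eq_div, one_div_mul_eq_div, div_le_div_iff₀ hT hS] at havg
    linarith
  have cross_lt := mul_sum_mul_lt_mul_sum_mul_of_dominant hST hS.le hcard hB hBpos cross_le hw hdom
  obtain ⟨m, hmT, hmS⟩ := exists_of_ssubset hST
  have energy_pos : 0 < ∑ i ∈ S, B i * w i :=
    sum_mul_pos_of_sum_pos (fun i hi => hB i (hST.1 hi)) hBpos
      fun i hi => (hw m hmT hmS).trans_lt (hdom i hi m hmT hmS)
  have energy_le : ∑ i ∈ S, B i * w i ≤ ∑ i ∈ T, B i * w i :=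
    sum_le_sum_of_subset_of_nonneg hST.1 fun j hjT hjS =>
      mul_nonneg (hB j hjT) (hw j hjT hjS)
  refine ⟨cross_lt, ?_, fun din dout hdout hdin => ?_⟩
  · rw [div_lt_div_iff₀ hT (energy_pos.trans_le energy_le)]
    linarith
  · exact div_sub_one_div_le_div hS.le hT (by exact_mod_cast hdin) (by exact_mod_cast hdout)

end OrderedField

/-- let `r < s`, let `σ 0 > σ 1 > ⋯ > σ (s-1) ≥ 0` and `B i ≥ 0`
(`i = 0, …, s-1`, indexing the singular values and the diagonal interaction energies)
with `∑_{i<r} B i > 0` and `(1/r)·∑_{i<r} B i ≥ (1/s)·∑_{i<s} B i`.  Then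
`s·∑_{i<r} B i σ i² > r·∑_{i<s} B i σ i²`, equivalently
`(∑_{i<r} B i σ i²)/(∑_{i<s} B i σ i²) > r/s`; moreover if `s < d_in` then
`r/s ≥ r/(d_in − 1/d_out)` for positive integers `d_in, d_out`. -/
theorem agzo_energy_fraction (r s : ℕ) (hr : 0 < r) (hrs : r < s)
    (σ B : ℕ → ℝ)
    (hσanti : ∀ i j, i < j → j < s → σ j < σ i)
    (hσnonneg : ∀ i, i < s → 0 ≤ σ i)
    (hBnonneg : ∀ i, i < s → 0 ≤ B i)
    (hBpos : 0 < ∑ i ∈ Finset.range r, B i)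
    (havg : (1 / r : ℝ) * ∑ i ∈ Finset.range r, B i
              ≥ (1 / s : ℝ) * ∑ i ∈ Finset.range s, B i) :
    (s : ℝ) * ∑ i ∈ Finset.range r, B i * σ i ^ 2
        > (r : ℝ) * ∑ i ∈ Finset.range s, B i * σ i ^ 2 ∧
    (∑ i ∈ Finset.range r, B i * σ i ^ 2) / (∑ i ∈ Finset.range s, B i * σ i ^ 2)
        > (r : ℝ) / s ∧
    ∀ din dout : ℕ, 0 < din → 0 < dout → s < din →
      (r : ℝ) / s ≥ (r : ℝ) / ((din : ℝ) - 1 / dout) := by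
  have hrange : range r ⊂ range s :=
    ⟨range_subset_range.2 hrs.le, fun h => hrs.not_ge (range_subset_range.1 h)⟩
  have hdom : ∀ i ∈ range r, ∀ j ∈ range s, j ∉ range r → σ j ^ 2 < σ i ^ 2 := by
    simp only [mem_range, not_lt]
    exact fun i hir j hjs hrj =>
      pow_lt_pow_left₀ (hσanti i j (hir.trans_le hrj) hjs) (hσnonneg j hjs) two_ne_zero
  obtain ⟨cross_lt, fraction_lt, mezo_le⟩ :=
    agzo_energy_fraction_general hrange (fun _ _ _ => sq_nonneg _) hdom
      (fun i hi => hBnonneg i (mem_range.1 hi)) hBpos (by simpa only [card_range] using havg)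
  simp only [card_range] at cross_lt fraction_lt mezo_le
  exact ⟨cross_lt, fraction_lt, fun din dout _ => mezo_le din dout⟩
end
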